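/- Let s ≥ 1, let z be a complex number with |z| < 1, and let a₀,…,a_{2s}, b₁,…,b_{2s} be complex numbers with Re(a₀) > 0 and Re(b_i) > Re(a_i) > 0 for all i. Then J_{2s}(a₀,…,a_{2s}; b₁,…,b_{2s}; z) = [Γ(a_{2s})Γ(a_{2s−1})Γ(b_{2s}−a_{2s})Γ(b_{2s−1}−a_{2s−1}) / (Γ(b_{2s})Γ(b_{2s−1}))] · ∑_{k=0}^∞ z^k (b_{2s}−a_{2s})_k (a_{2s−1})_k (a₀)_k / (k! (b_{2s})_k (b_{2s−1})_k) · J_{2s−2}(a₀+k, a₁+k, …, a_{2s−2}+k; b₁+k, …, b_{2s−2}+k; z). -/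

import Mathlib

open MeasureTheory

/-- Pochhammer symbol `(x)_k = x(x+1)⋯(x+k-1)`. -/
noncomputable def poch (x : ℂ) (k : ℕ) : ℂ := ∏ i ∈ Finset.range k, (x + (i : ℂ))

/-- Generalized hypergeometric series with upper parameters `α`, lower parameters `β`. -/
noncomputable def hyp (α β : List ℂ) (z : ℂ) : ℂ :=
  ∑' k : ℕ, ((α.map fun w => poch w k).prod /
    ((β.map fun w => poch w k).prod * (Nat.factorial k : ℂ))) * z ^ k

/-- Nested expression: `nestR [x₁,…,x_m] = 1 - (1 - (⋯(1 - x_m)x_{m-1}⋯))x₁`. -/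
def nestR : List ℝ → ℝ
  | [] => 1
  | t :: rest => 1 - nestR rest * t

/-- The Vasilyev-type integral `J_m(a₀,…,a_m; b₁,…,b_m; z)`. -/
noncomputable def Jint (m : ℕ) (a b : ℕ → ℂ) (z : ℂ) : ℂ :=
  ∫ x in Set.univ.pi fun _ : Fin m => Set.Ioo (0:ℝ) 1,
    (∏ i : Fin m, ((x i : ℂ) ^ (a (i.1+1) - 1) *
        ((1 - x i : ℝ) : ℂ) ^ (b (i.1+1) - a (i.1+1) - 1))) /
      ((1 - ((nestR (List.ofFn x).tail * (List.ofFn x).headI : ℝ) : ℂ) * z) ^ (a 0))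

/-!
Let `Q_m` be the expression whose power `a₀` is the denominator of `J_m`. Passing from `2s - 2` to
`2s` variables changes it by a monomial, `Q_{2s} = Q_{2s-2} - z p` with
`p = x₁ ⋯ x_{2s-1} (1 - x_{2s})`, and on the unit cube `|z p| ≤ |z| |Q_{2s-2}|`. Hence the binomial
series of `(Q_{2s-2} - z p)^{-a₀}` converges uniformly and may be integrated term by term. In the
`k`-th term, `p ^ k` only shifts the exponents of the beta weights, so the last two variables
integrate to beta functions and the others to `J_{2s-2}` with parameters shifted by `k`.
-/

section Pochhammer

lemma ascPochhammer_eval_eq_poch (x : ℂ) (k : ℕ) : (ascPochhammer ℂ k).eval x = poch x k := by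
  induction k with
  | zero => simp [poch]
  | succ k ih => rw [ascPochhammer_succ_eval, ih, poch, poch, Finset.prod_range_succ]

lemma choose_add_sub_one_eq_poch_div_factorial (x : ℂ) (k : ℕ) :
    Ring.choose (x + k - 1) k = poch x k / (Nat.factorial k : ℂ) := by
  rw [← Ring.multichoose_eq, eq_div_iff (by exact_mod_cast k.factorial_ne_zero), mul_comm,
    ← nsmul_eq_mul, Ring.factorial_nsmul_multichoose_eq_ascPochhammer,
    Polynomial.ascPochhammer_smeval_eq_eval, ascPochhammer_eval_eq_poch]

lemma Gamma_add_natCast_eq_Gamma_mul_poch {x : ℂ} (hx : ∀ m : ℕ, x ≠ -m) (k : ℕ) :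
    Complex.Gamma (x + k) = Complex.Gamma x * poch x k := by
  rw [← ascPochhammer_eval_eq_poch, ← Complex.Gamma_add_nat_div_Gamma_eq x hx,
    mul_div_cancel₀ _ (Complex.Gamma_ne_zero hx)]

lemma ne_neg_natCast_of_re_pos {x : ℂ} (hx : 0 < x.re) (m : ℕ) : x ≠ -m := by
  rintro rfl
  rw [Complex.neg_re, Complex.natCast_re] at hx
  linarith [m.cast_nonneg (α := ℝ)]

end Pochhammer

section BinomialSeries

lemma hasSum_poch_div_factorial_mul_pow (c : ℂ) {w : ℂ} (hw : ‖w‖ < 1) :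
    HasSum (fun k : ℕ => poch c k / (Nat.factorial k : ℂ) * w ^ k) (1 / (1 - w) ^ c) := by
  have h := (Complex.one_div_one_sub_cpow_hasFPowerSeriesOnBall_zero c).hasSum
    (y := w) (by simpa [enorm_eq_nnnorm, ← NNReal.coe_lt_coe] using hw)
  simpa [FormalMultilinearSeries.ofScalars, choose_add_sub_one_eq_poch_div_factorial, mul_comm]
    using h

lemma mul_cpow_of_arg_add_arg_mem_Ioc {x y : ℂ}
    (h : x.arg + y.arg ∈ Set.Ioc (-Real.pi) Real.pi) (c : ℂ) :
    (x * y) ^ c = x ^ c * y ^ c := by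
  rcases eq_or_ne c 0 with rfl | hc
  · simp
  rcases eq_or_ne x 0 with rfl | hx
  · simp [hc]
  rcases eq_or_ne y 0 with rfl | hy
  · simp [hc]
  rw [Complex.cpow_def_of_ne_zero (mul_ne_zero hx hy), Complex.cpow_def_of_ne_zero hx,
    Complex.cpow_def_of_ne_zero hy, Complex.log_mul hx hy h, add_mul, Complex.exp_add]

lemma mul_cpow_of_re_pos {x y : ℂ} (hx : 0 < x.re) (hy : 0 < y.re) (c : ℂ) :
    (x * y) ^ c = x ^ c * y ^ c := by
  have harg_x := abs_lt.1 (Complex.abs_arg_lt_pi_div_two_iff.2 (Or.inl hx))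
  have harg_y := abs_lt.1 (Complex.abs_arg_lt_pi_div_two_iff.2 (Or.inl hy))
  exact mul_cpow_of_arg_add_arg_mem_Ioc ⟨by linarith, by linarith⟩ c

/-- The `k`-th term of the binomial expansion of `(q - w) ^ (-c)` in powers of `w`. -/
noncomputable def binomTerm (c q w : ℂ) (k : ℕ) : ℂ :=
  poch c k / (Nat.factorial k : ℂ) * w ^ k / q ^ (c + k)

lemma binomTerm_eq_one_div_cpow_mul (c w : ℂ) {q : ℂ} (hq : q ≠ 0) (k : ℕ) :
    binomTerm c q w k =
      1 / q ^ c * (poch c k / (Nat.factorial k : ℂ) * (w / q) ^ k) := by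
  rw [binomTerm, Complex.cpow_add _ _ hq, Complex.cpow_natCast, div_pow]
  ring

lemma hasSum_binomTerm (c : ℂ) {q w : ℂ} (hq : 0 < q.re) (hw : ‖w‖ < ‖q‖) :
    HasSum (binomTerm c q w) (1 / (q - w) ^ c) := by
  have hq0 : q ≠ 0 := by rintro rfl; simp at hq
  have hratio : ‖w / q‖ < 1 := by rwa [norm_div, div_lt_one (norm_pos_iff.2 hq0)]
  have hre : 0 < (1 - w / q).re := by
    rw [Complex.sub_re, Complex.one_re]
    linarith [Complex.re_le_norm (w / q)]
  have hfactor : q * (1 - w / q) = q - w := by rw [mul_sub, mul_one, mul_div_cancel₀ _ hq0]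
  have h := (hasSum_poch_div_factorial_mul_pow c hratio).mul_left (1 / q ^ c)
  simp_rw [← binomTerm_eq_one_div_cpow_mul c w hq0] at h
  rwa [div_mul_div_comm, one_mul, ← mul_cpow_of_re_pos hq hre, hfactor] at h

lemma norm_binomTerm_le (c : ℂ) {q w : ℂ} (hq : q ≠ 0) {r : ℝ} (hw : ‖w‖ ≤ r * ‖q‖) (k : ℕ) :
    ‖binomTerm c q w k‖ ≤ ‖1 / q ^ c‖ * (‖poch c k / (Nat.factorial k : ℂ)‖ * r ^ k) := by
  have hratio : ‖w / q‖ ≤ r := by rwa [norm_div, div_le_iff₀ (norm_pos_iff.2 hq)]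
  rw [binomTerm_eq_one_div_cpow_mul c w hq, norm_mul, norm_mul, norm_pow]
  gcongr

end BinomialSeries

section NestedExpression

lemma nestR_tail_mul_headI (l : List ℝ) : nestR l.tail * l.headI = 1 - nestR l := by
  cases l with
  | nil => simp [nestR, show ([] : List ℝ).headI = 0 from rfl]
  | cons t l => simp [nestR]

lemma nestR_append_pair (l : List ℝ) (u v : ℝ) :
    nestR (l ++ [u, v]) = nestR l - (-1) ^ l.length * (l.prod * (u * (1 - v))) := by
  induction l with
  | nil => simp [nestR]; ring
  | cons t l ih => simp [nestR, ih]; ring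

lemma nestR_mem_Icc {l : List ℝ} (hl : ∀ t ∈ l, t ∈ Set.Icc (0 : ℝ) 1) :
    nestR l ∈ Set.Icc (0 : ℝ) 1 := by
  induction l with
  | nil => simp [nestR]
  | cons t l ih =>
    obtain ⟨ht, hl⟩ := List.forall_mem_cons.1 hl
    exact Set.Icc.one_sub_mem ⟨mul_nonneg (ih hl).1 ht.1, mul_le_one₀ (ih hl).2 ht.1 ht.2⟩

-- Appending `1, 0` subtracts `l.prod` from `nestR l`, and the result is still nonnegative.
lemma prod_le_nestR {l : List ℝ} (hl : ∀ t ∈ l, t ∈ Set.Icc (0 : ℝ) 1) (heven : Even l.length) :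
    l.prod ≤ nestR l := by
  have hl' : ∀ t ∈ l ++ [1, 0], t ∈ Set.Icc (0 : ℝ) 1 := by
    simpa [or_imp, forall_and] using hl
  have hnonneg := (nestR_mem_Icc hl').1
  rw [nestR_append_pair, heven.neg_one_pow] at hnonneg
  linarith

lemma measurable_nestR_ofFn (m : ℕ) : Measurable fun x : Fin m → ℝ => nestR (List.ofFn x) := by
  induction m with
  | zero => simp [nestR]
  | succ m ih =>
    simp only [List.ofFn_succ, nestR]
    exact measurable_const.sub ((ih.comp (by fun_prop)).mul (by fun_prop))

end NestedExpression

section Denominator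

/-- The expression `Q_m` whose power `a₀` is the denominator of `J_m`, as a function of the value
`t = nestR [x₁, …, x_m]`. -/
noncomputable def nestDenom (z : ℂ) (t : ℝ) : ℂ := 1 - ((1 - t : ℝ) : ℂ) * z

lemma nestDenom_sub (z : ℂ) (t p : ℝ) : nestDenom z (t - p) = nestDenom z t - z * p := by
  simp only [nestDenom, Complex.ofReal_sub, Complex.ofReal_one]
  ring

lemma one_sub_norm_le_re_nestDenom (z : ℂ) {t : ℝ} (ht : t ∈ Set.Icc (0 : ℝ) 1) :
    1 - ‖z‖ ≤ (nestDenom z t).re := by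
  rw [nestDenom, Complex.sub_re, Complex.re_ofReal_mul, Complex.one_re]
  nlinarith [ht.1, ht.2, Complex.re_le_norm z, norm_nonneg z]

lemma self_le_re_nestDenom {z : ℂ} (hz : z.re ≤ 1) {t : ℝ} (ht : t ≤ 1) :
    t ≤ (nestDenom z t).re := by
  rw [nestDenom, Complex.sub_re, Complex.re_ofReal_mul, Complex.one_re]
  nlinarith

lemma re_nestDenom_pos {z : ℂ} (hz : ‖z‖ < 1) {t : ℝ} (ht : t ∈ Set.Icc (0 : ℝ) 1) :
    0 < (nestDenom z t).re :=
  (sub_pos.2 hz).trans_le (one_sub_norm_le_re_nestDenom z ht)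

lemma nestDenom_ne_zero {z : ℂ} (hz : ‖z‖ < 1) {t : ℝ} (ht : t ∈ Set.Icc (0 : ℝ) 1) :
    nestDenom z t ≠ 0 :=
  fun h => (re_nestDenom_pos hz ht).ne' (by rw [h, Complex.zero_re])

lemma norm_mul_ofReal_le_norm_mul_norm_nestDenom {z : ℂ} (hz : ‖z‖ ≤ 1) {t p : ℝ} (ht : t ≤ 1)
    (hp : p ∈ Set.Icc 0 t) : ‖z * p‖ ≤ ‖z‖ * ‖nestDenom z t‖ := by
  rw [norm_mul, Complex.norm_of_nonneg hp.1]
  gcongr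
  calc p ≤ t := hp.2
    _ ≤ (nestDenom z t).re := self_le_re_nestDenom ((Complex.re_le_norm z).trans hz) ht
    _ ≤ ‖nestDenom z t‖ := Complex.re_le_norm _

lemma exists_norm_one_div_nestDenom_cpow_le {z : ℂ} (hz : ‖z‖ < 1) (c : ℂ) :
    ∃ C, ∀ t ∈ Set.Icc (0 : ℝ) 1, ‖1 / nestDenom z t ^ c‖ ≤ C := by
  refine isCompact_Icc.exists_bound_of_continuousOn (continuousOn_const.div ?_ fun t ht => ?_)
  · refine ContinuousOn.cpow_const ?_ fun t ht => Or.inl (re_nestDenom_pos hz ht)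
    unfold nestDenom
    fun_prop
  · exact Complex.cpow_ne_zero_iff.2 (Or.inl (nestDenom_ne_zero hz ht))

end Denominator

section BetaWeight

/-- The density of the Euler beta integral with parameters `a` and `b - a`; `J_m` is an integral
against a product of these. -/
noncomputable def betaWeight (a b : ℂ) (t : ℝ) : ℂ :=
  (t : ℂ) ^ (a - 1) * ((1 - t : ℝ) : ℂ) ^ (b - a - 1)

lemma betaWeight_mul_pow (a b : ℂ) {t : ℝ} (ht : t ≠ 0) (k : ℕ) :
    betaWeight a b t * (t : ℂ) ^ k = betaWeight (a + k) (b + k) t := by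
  rw [betaWeight, betaWeight, add_sub_add_right_eq_sub, add_sub_right_comm,
    Complex.cpow_add _ _ (Complex.ofReal_ne_zero.2 ht), Complex.cpow_natCast]
  ring

lemma betaWeight_mul_one_sub_pow (a b : ℂ) {t : ℝ} (ht : t ≠ 1) (k : ℕ) :
    betaWeight a b t * ((1 - t : ℝ) : ℂ) ^ k = betaWeight a (b + k) t := by
  rw [betaWeight, betaWeight, show b + k - a - 1 = b - a - 1 + k by ring,
    Complex.cpow_add _ _ (Complex.ofReal_ne_zero.2 (sub_ne_zero.2 ht.symm)), Complex.cpow_natCast]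
  ring

variable {a b : ℂ}

lemma integrableOn_betaWeight (ha : 0 < a.re) (hab : a.re < b.re) :
    IntegrableOn (betaWeight a b) (Set.Ioo 0 1) := by
  have h := Complex.betaIntegral_convergent (u := a) (v := b - a) ha (by simpa using hab)
  rw [intervalIntegrable_iff_integrableOn_Ioo_of_le zero_le_one] at h
  unfold betaWeight
  simpa using h

lemma integral_betaWeight (ha : 0 < a.re) (hab : a.re < b.re) :
    ∫ t in Set.Ioo (0 : ℝ) 1, betaWeight a b t =
      Complex.Gamma a * Complex.Gamma (b - a) / Complex.Gamma b := by
  have h := Complex.betaIntegral_eq_Gamma_mul_div a (b - a) ha (by simpa using hab)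
  rw [add_sub_cancel, Complex.betaIntegral, intervalIntegral.integral_of_le zero_le_one,
    integral_Ioc_eq_integral_Ioo] at h
  simpa [betaWeight] using h

lemma integral_betaWeight_add_natCast_add_natCast (ha : 0 < a.re) (hab : a.re < b.re) (k : ℕ) :
    ∫ t in Set.Ioo (0 : ℝ) 1, betaWeight (a + k) (b + k) t =
      Complex.Gamma a * Complex.Gamma (b - a) / Complex.Gamma b * (poch a k / poch b k) := by
  have hshift : 0 < (a + k).re := by
    rw [Complex.add_re, Complex.natCast_re]
    positivity
  rw [integral_betaWeight hshift (by simpa using hab), add_sub_add_right_eq_sub,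
    Gamma_add_natCast_eq_Gamma_mul_poch (ne_neg_natCast_of_re_pos ha),
    Gamma_add_natCast_eq_Gamma_mul_poch (ne_neg_natCast_of_re_pos (ha.trans hab)),
    mul_right_comm, mul_div_mul_comm]

lemma integral_betaWeight_add_natCast_right (ha : 0 < a.re) (hab : a.re < b.re) (k : ℕ) :
    ∫ t in Set.Ioo (0 : ℝ) 1, betaWeight a (b + k) t =
      Complex.Gamma a * Complex.Gamma (b - a) / Complex.Gamma b *
        (poch (b - a) k / poch b k) := by
  have hsub : 0 < (b - a).re := by simpa using hab
  have hshift : a.re < (b + k).re := by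
    rw [Complex.add_re, Complex.natCast_re]
    linarith [k.cast_nonneg (α := ℝ)]
  rw [integral_betaWeight ha hshift, add_sub_right_comm,
    Gamma_add_natCast_eq_Gamma_mul_poch (ne_neg_natCast_of_re_pos hsub),
    Gamma_add_natCast_eq_Gamma_mul_poch (ne_neg_natCast_of_re_pos (ha.trans hab)),
    ← mul_assoc, mul_div_mul_comm]

end BetaWeight

section Integration

variable {α : Type*} [MeasurableSpace α] {μ : Measure α}

lemma hasSum_integral_mul_of_summable_bound {ι A : Type*} [Countable ι] [NormedRing A]
    [NormedSpace ℝ A] {W g : α → A} {f : ι → α → A} {u : ι → ℝ} (hW : Integrable W μ)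
    (hf : ∀ k, AEStronglyMeasurable (f k) μ) (hfu : ∀ k, ∀ᵐ x ∂μ, ‖f k x‖ ≤ u k)
    (hu : Summable u) (hfg : ∀ᵐ x ∂μ, HasSum (fun k => f k x) (g x)) :
    HasSum (fun k => ∫ x, W x * f k x ∂μ) (∫ x, W x * g x ∂μ) := by
  refine hasSum_integral_of_dominated_convergence (fun k x => ‖W x‖ * u k)
    (fun k => hW.aestronglyMeasurable.mul (hf k)) (fun k => ?_)
    (.of_forall fun x => hu.mul_left _) ?_ (hfg.mono fun x hx => hx.mul_left _)
  · filter_upwards [hfu k] with x hx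
    exact (norm_mul_le _ _).trans (by gcongr)
  · simpa only [tsum_mul_left] using hW.norm.mul_const (∑' k, u k)

lemma integral_pi_init_mul_last {n : ℕ} {𝕜 : Type*} [RCLike 𝕜]
    (ν : Fin (n + 1) → Measure α) [∀ i, SigmaFinite (ν i)] (f : (Fin n → α) → 𝕜) (g : α → 𝕜) :
    ∫ x, f (Fin.init x) * g (x (Fin.last n)) ∂Measure.pi ν =
      (∫ y, f y ∂Measure.pi fun i => ν i.castSucc) * ∫ t, g t ∂ν (Fin.last n) := by
  have h := (measurePreserving_piFinSuccAbove ν (Fin.last n)).integral_comp'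
    fun p : α × (Fin n → α) => g p.1 * f p.2
  rw [integral_prod_mul, mul_comm] at h
  simpa [MeasurableEquiv.piFinSuccAbove, mul_comm] using h

end Integration

section UnitCube

/-- Lebesgue measure on the open unit cube `(0, 1)ᵐ`, as a product measure. -/
noncomputable def cubeMeasure (m : ℕ) : Measure (Fin m → ℝ) :=
  Measure.pi fun _ => volume.restrict (Set.Ioo 0 1)

lemma cubeMeasure_eq_restrict (m : ℕ) :
    cubeMeasure m = volume.restrict (Set.univ.pi fun _ => Set.Ioo 0 1) := by
  rw [cubeMeasure, volume_pi, Measure.restrict_pi_pi]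

lemma ae_cubeMeasure_mem_Ioo (m : ℕ) :
    ∀ᵐ x ∂cubeMeasure m, ∀ i, x i ∈ Set.Ioo (0 : ℝ) 1 := by
  rw [cubeMeasure_eq_restrict]
  filter_upwards [ae_restrict_mem (.univ_pi fun _ => measurableSet_Ioo)] with x hx i
  exact hx i trivial

end UnitCube

section Integrand

/-- The numerator of the integrand of `J_m`. -/
noncomputable def betaWeightProd (a b : ℕ → ℂ) {m : ℕ} (x : Fin m → ℝ) : ℂ :=
  ∏ i, betaWeight (a (i.1 + 1)) (b (i.1 + 1)) (x i)

/-- The integrand of `J_m`. -/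
noncomputable def Jintegrand (a b : ℕ → ℂ) (z : ℂ) {m : ℕ} (x : Fin m → ℝ) : ℂ :=
  betaWeightProd a b x / nestDenom z (nestR (List.ofFn x)) ^ a 0

lemma Jint_eq_integral_Jintegrand (m : ℕ) (a b : ℕ → ℂ) (z : ℂ) :
    Jint m a b z = ∫ x, Jintegrand a b z x ∂cubeMeasure m := by
  simp only [Jint, cubeMeasure_eq_restrict, nestR_tail_mul_headI]
  rfl

lemma integrable_betaWeightProd {m : ℕ} {a b : ℕ → ℂ}
    (hab : ∀ i, 1 ≤ i → i ≤ m → (a i).re < (b i).re ∧ 0 < (a i).re) :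
    Integrable (betaWeightProd a b) (cubeMeasure m) :=
  Integrable.fintype_prod fun i =>
    have h := hab (i.1 + 1) (by omega) (by omega)
    integrableOn_betaWeight h.2 h.1

lemma betaWeightProd_mul_prod_pow (a b : ℕ → ℂ) {m : ℕ} {x : Fin m → ℝ} (hx : ∀ i, x i ≠ 0)
    (k : ℕ) :
    betaWeightProd a b x * (∏ i, (x i : ℂ)) ^ k =
      betaWeightProd (fun i => a i + k) (fun i => b i + k) x := by
  rw [betaWeightProd, ← Finset.prod_pow, ← Finset.prod_mul_distrib]
  exact Finset.prod_congr rfl fun i _ => betaWeight_mul_pow _ _ (hx i) k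

variable {n : ℕ}

/-- The point `(x₁, …, x_n)` of the cube obtained from `(x₁, …, x_{n+2})`. -/
def dropLastTwo (x : Fin (n + 2) → ℝ) : Fin n → ℝ := Fin.init (Fin.init x)

/-- The monomial `x₁ ⋯ x_{n+1} (1 - x_{n+2})` by which `Q_{n+2}` and `Q_n` differ, up to the
factor `±z`. -/
def lastTwoMonomial (x : Fin (n + 2) → ℝ) : ℝ :=
  (∏ i, dropLastTwo x i) * (x (Fin.last n).castSucc * (1 - x (Fin.last (n + 1))))

lemma ofFn_eq_ofFn_dropLastTwo_append (x : Fin (n + 2) → ℝ) :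
    List.ofFn x =
      List.ofFn (dropLastTwo x) ++ [x (Fin.last n).castSucc, x (Fin.last (n + 1))] := by
  rw [List.ofFn_succ_last, List.ofFn_succ_last, List.append_assoc]
  rfl

lemma nestR_ofFn_eq_sub_lastTwoMonomial (hn : Even n) (x : Fin (n + 2) → ℝ) :
    nestR (List.ofFn x) = nestR (List.ofFn (dropLastTwo x)) - lastTwoMonomial x := by
  rw [ofFn_eq_ofFn_dropLastTwo_append, nestR_append_pair, List.length_ofFn, hn.neg_one_pow,
    List.prod_ofFn, one_mul, lastTwoMonomial]

lemma nestR_ofFn_dropLastTwo_mem_Icc {x : Fin (n + 2) → ℝ} (hx : ∀ i, x i ∈ Set.Icc (0 : ℝ) 1) :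
    nestR (List.ofFn (dropLastTwo x)) ∈ Set.Icc (0 : ℝ) 1 :=
  nestR_mem_Icc (List.forall_mem_ofFn_iff.2 fun _ => hx _)

lemma lastTwoMonomial_mem_Icc (hn : Even n) {x : Fin (n + 2) → ℝ}
    (hx : ∀ i, x i ∈ Set.Icc (0 : ℝ) 1) :
    lastTwoMonomial x ∈ Set.Icc 0 (nestR (List.ofFn (dropLastTwo x))) := by
  have hprod_nonneg : 0 ≤ ∏ i, dropLastTwo x i := Finset.prod_nonneg fun i _ => (hx _).1
  have hprod_le : ∏ i, dropLastTwo x i ≤ nestR (List.ofFn (dropLastTwo x)) := by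
    rw [← List.prod_ofFn]
    exact prod_le_nestR (List.forall_mem_ofFn_iff.2 fun _ => hx _) (by simpa using hn)
  have hlast := unitInterval.mul_mem (hx (Fin.last n).castSucc)
    (Set.Icc.one_sub_mem (hx (Fin.last (n + 1))))
  exact ⟨mul_nonneg hprod_nonneg hlast.1,
    (mul_le_of_le_one_right hprod_nonneg hlast.2).trans hprod_le⟩

/-- The `k`-th term of the binomial expansion of `Q_{n+2} ^ (-c) = (Q_n - z p) ^ (-c)`, where `p`
is `lastTwoMonomial x`. -/
noncomputable def denomTerm (c z : ℂ) (k : ℕ) (x : Fin (n + 2) → ℝ) : ℂ :=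
  binomTerm c (nestDenom z (nestR (List.ofFn (dropLastTwo x)))) (z * lastTwoMonomial x) k

lemma measurable_denomTerm (c z : ℂ) (k : ℕ) :
    Measurable (denomTerm c z k : (Fin (n + 2) → ℝ) → ℂ) := by
  have hdrop : Measurable (dropLastTwo : (Fin (n + 2) → ℝ) → Fin n → ℝ) := by
    unfold dropLastTwo Fin.init
    fun_prop
  have hnest := (measurable_nestR_ofFn n).comp hdrop
  unfold denomTerm binomTerm nestDenom lastTwoMonomial
  fun_prop

section Expansion

variable {z : ℂ} (hz : ‖z‖ < 1) (hn : Even n)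
include hz hn

lemma hasSum_denomTerm (c : ℂ) {x : Fin (n + 2) → ℝ} (hx : ∀ i, x i ∈ Set.Icc (0 : ℝ) 1) :
    HasSum (fun k => denomTerm c z k x) (1 / nestDenom z (nestR (List.ofFn x)) ^ c) := by
  have hnest := nestR_ofFn_dropLastTwo_mem_Icc hx
  have hre := re_nestDenom_pos hz hnest
  rw [nestR_ofFn_eq_sub_lastTwoMonomial hn, nestDenom_sub]
  refine hasSum_binomTerm c hre ?_
  calc ‖z * lastTwoMonomial x‖
      ≤ ‖z‖ * ‖nestDenom z (nestR (List.ofFn (dropLastTwo x)))‖ :=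
        norm_mul_ofReal_le_norm_mul_norm_nestDenom hz.le hnest.2 (lastTwoMonomial_mem_Icc hn hx)
    _ < ‖nestDenom z (nestR (List.ofFn (dropLastTwo x)))‖ :=
        mul_lt_of_lt_one_left (norm_pos_iff.2 (nestDenom_ne_zero hz hnest)) hz

lemma exists_summable_norm_denomTerm_le (c : ℂ) :
    ∃ u : ℕ → ℝ, Summable u ∧ ∀ (k : ℕ) (x : Fin (n + 2) → ℝ), (∀ i, x i ∈ Set.Icc (0 : ℝ) 1) →
      ‖denomTerm c z k x‖ ≤ u k := by
  obtain ⟨C, hC⟩ := exists_norm_one_div_nestDenom_cpow_le hz c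
  refine ⟨fun k => C * (‖poch c k / (Nat.factorial k : ℂ)‖ * ‖z‖ ^ k), ?_, fun k x hx => ?_⟩
  · simpa only [norm_mul, norm_pow] using
      (hasSum_poch_div_factorial_mul_pow c hz).summable.norm.mul_left C
  · have hnest := nestR_ofFn_dropLastTwo_mem_Icc hx
    have hnorm := norm_mul_ofReal_le_norm_mul_norm_nestDenom hz.le hnest.2
      (lastTwoMonomial_mem_Icc hn hx)
    exact (norm_binomTerm_le c (nestDenom_ne_zero hz hnest) hnorm k).trans
      (mul_le_mul_of_nonneg_right (hC _ hnest) (by positivity))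

end Expansion

lemma betaWeightProd_mul_denomTerm (a b : ℕ → ℂ) (z : ℂ) (k : ℕ) {x : Fin (n + 2) → ℝ}
    (hx : ∀ i, x i ∈ Set.Ioo (0 : ℝ) 1) :
    betaWeightProd a b x * denomTerm (a 0) z k x =
      z ^ k * (poch (a 0) k / (Nat.factorial k : ℂ)) *
        (Jintegrand (fun i => a i + k) (fun i => b i + k) z (dropLastTwo x) *
          betaWeight (a (n + 1) + k) (b (n + 1) + k) (x (Fin.last n).castSucc) *
          betaWeight (a (n + 2)) (b (n + 2) + k) (x (Fin.last (n + 1)))) := by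
  have hsplit : betaWeightProd a b x =
      betaWeightProd a b (dropLastTwo x) *
        betaWeight (a (n + 1)) (b (n + 1)) (x (Fin.last n).castSucc) *
        betaWeight (a (n + 2)) (b (n + 2)) (x (Fin.last (n + 1))) := by
    rw [betaWeightProd, Fin.prod_univ_castSucc, Fin.prod_univ_castSucc]
    rfl
  rw [hsplit, Jintegrand,
    ← betaWeightProd_mul_prod_pow a b (x := dropLastTwo x) fun _ => (hx _).1.ne',
    ← betaWeight_mul_pow _ _ (hx _).1.ne', ← betaWeight_mul_one_sub_pow _ _ (hx _).2.ne]
  simp only [denomTerm, binomTerm, lastTwoMonomial, Complex.ofReal_mul, Complex.ofReal_prod,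
    mul_pow]
  ring

lemma integral_cubeMeasure_dropLastTwo_mul_mul (f : (Fin n → ℝ) → ℂ) (g h : ℝ → ℂ) :
    ∫ x, f (dropLastTwo x) * g (x (Fin.last n).castSucc) * h (x (Fin.last (n + 1)))
        ∂cubeMeasure (n + 2) =
      (∫ y, f y ∂cubeMeasure n) * (∫ t in Set.Ioo 0 1, g t) * ∫ t in Set.Ioo 0 1, h t := by
  have hinner := integral_pi_init_mul_last (fun _ => volume.restrict (Set.Ioo 0 1)) f g
  have houter := integral_pi_init_mul_last (fun _ => volume.restrict (Set.Ioo 0 1))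
    (fun y : Fin (n + 1) → ℝ => f (Fin.init y) * g (y (Fin.last n))) h
  rwa [hinner] at houter

lemma integral_betaWeightProd_mul_denomTerm (a b : ℕ → ℂ) (z : ℂ) (k : ℕ)
    (hab₁ : (a (n + 1)).re < (b (n + 1)).re) (ha₁ : 0 < (a (n + 1)).re)
    (hab₂ : (a (n + 2)).re < (b (n + 2)).re) (ha₂ : 0 < (a (n + 2)).re) :
    ∫ x, betaWeightProd a b x * denomTerm (a 0) z k x ∂cubeMeasure (n + 2) =
      (Complex.Gamma (a (n + 2)) * Complex.Gamma (a (n + 1)) *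
        Complex.Gamma (b (n + 2) - a (n + 2)) * Complex.Gamma (b (n + 1) - a (n + 1)) /
        (Complex.Gamma (b (n + 2)) * Complex.Gamma (b (n + 1)))) *
      (z ^ k *
        (poch (b (n + 2) - a (n + 2)) k * poch (a (n + 1)) k * poch (a 0) k /
          ((Nat.factorial k : ℂ) * poch (b (n + 2)) k * poch (b (n + 1)) k)) *
        Jint n (fun i => a i + k) (fun i => b i + k) z) := by
  have hpointwise := (ae_cubeMeasure_mem_Ioo (n + 2)).mono fun x hx =>
    betaWeightProd_mul_denomTerm a b z k hx
  rw [integral_congr_ae hpointwise, integral_const_mul, integral_cubeMeasure_dropLastTwo_mul_mul,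
    ← Jint_eq_integral_Jintegrand, integral_betaWeight_add_natCast_add_natCast ha₁ hab₁,
    integral_betaWeight_add_natCast_right ha₂ hab₂]
  simp only [div_eq_mul_inv, mul_inv]
  ring

end Integrand

theorem J_even_recursion_general {n : ℕ} (hn : Even n) {z : ℂ} (hz : ‖z‖ < 1) {a b : ℕ → ℂ}
    (hab : ∀ i : ℕ, 1 ≤ i → i ≤ n + 2 → (a i).re < (b i).re ∧ 0 < (a i).re) :
    HasSum (fun k : ℕ =>
      (Complex.Gamma (a (n + 2)) * Complex.Gamma (a (n + 1)) *
        Complex.Gamma (b (n + 2) - a (n + 2)) * Complex.Gamma (b (n + 1) - a (n + 1)) /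
        (Complex.Gamma (b (n + 2)) * Complex.Gamma (b (n + 1)))) *
      (z ^ k *
        (poch (b (n + 2) - a (n + 2)) k * poch (a (n + 1)) k * poch (a 0) k /
          ((Nat.factorial k : ℂ) * poch (b (n + 2)) k * poch (b (n + 1)) k)) *
        Jint n (fun i => a i + k) (fun i => b i + k) z))
      (Jint (n + 2) a b z) := by
  have hcube : ∀ᵐ x ∂cubeMeasure (n + 2), ∀ i, x i ∈ Set.Icc (0 : ℝ) 1 :=
    (ae_cubeMeasure_mem_Ioo (n + 2)).mono fun x hx i => Set.Ioo_subset_Icc_self (hx i)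
  obtain ⟨u, hu, hbound⟩ := exists_summable_norm_denomTerm_le hz hn (a 0)
  have hsum := hasSum_integral_mul_of_summable_bound (integrable_betaWeightProd hab)
    (fun k => (measurable_denomTerm (a 0) z k).aestronglyMeasurable)
    (fun k => hcube.mono (hbound k)) hu (hcube.mono fun _ => hasSum_denomTerm hz hn (a 0))
  obtain ⟨hab₁, ha₁⟩ := hab (n + 1) (by omega) (by omega)
  obtain ⟨hab₂, ha₂⟩ := hab (n + 2) (by omega) le_rfl
  simp_rw [integral_betaWeightProd_mul_denomTerm a b z _ hab₁ ha₁ hab₂ ha₂, mul_one_div] at hsum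
  rwa [Jint_eq_integral_Jintegrand]

/-- the even-step recursion for the Vasilyev-type integral. -/
theorem J_even_recursion (s : ℕ) (hs : 1 ≤ s) (z : ℂ) (hz : ‖z‖ < 1) (a b : ℕ → ℂ)
    (ha0 : 0 < (a 0).re)
    (hab : ∀ i : ℕ, 1 ≤ i → i ≤ 2*s → (a i).re < (b i).re ∧ 0 < (a i).re) :
    Jint (2*s) a b z =
      (Complex.Gamma (a (2*s)) * Complex.Gamma (a (2*s-1)) *
        Complex.Gamma (b (2*s) - a (2*s)) * Complex.Gamma (b (2*s-1) - a (2*s-1)) /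
        (Complex.Gamma (b (2*s)) * Complex.Gamma (b (2*s-1)))) *
      ∑' k : ℕ, z ^ k *
        (poch (b (2*s) - a (2*s)) k * poch (a (2*s-1)) k * poch (a 0) k /
          ((Nat.factorial k : ℂ) * poch (b (2*s)) k * poch (b (2*s-1)) k)) *
        Jint (2*s-2) (fun i => a i + k) (fun i => b i + k) z := by
  obtain ⟨s, rfl⟩ := Nat.exists_eq_add_of_le' hs
  rw [← tsum_mul_left]
  exact (J_even_recursion_general (even_two_mul s) hz hab).tsum_eq.symm
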